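/- For every integer r ≥ 1, the group homomorphism P_r : M_{r,∞} → ℤ₂^× is surjective; consequently the quotient group M_{r,∞}/B_{r,∞} is isomorphic to ℤ₂^×. -/

import Mathlib

/-- Nodes of the infinite binary rooted tree `T_∞` are finite words over `{a,b}`,
encoded as `List Bool` with `a = false` and `b = true`; children of `w` are
`w ++ [false]` and `w ++ [true]`. An automorphism of `T_∞`. -/
def IsTreeAut (σ : List Bool → List Bool) : Prop :=
  Function.Bijective σ ∧ (∀ w, (σ w).length = w.length) ∧
    ∀ w s, ∃ t, σ (w ++ [s]) = σ w ++ [t]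

/-- The parity `Par(σ,x) ∈ {0,1}`: `0` if `σ(xa) = σ(x)a`, and `1` otherwise. -/
def par (σ : List Bool → List Bool) (x : List Bool) : ℕ :=
  if σ (x ++ [false]) = σ x ++ [false] then 0 else 1

/-- `W(r,i)`: the words `s₁ ⋯ s_{ri−1}` of length `r*i − 1` over `{a,b}` with
`s_j = a` whenever `r ∣ j`. -/
noncomputable def Wset (r i : ℕ) : Finset (List Bool) :=
  ((Finset.univ : Finset (Fin (r*i-1) → Bool)).filter
    (fun s => ∀ j : Fin (r*i-1), r ∣ (j:ℕ)+1 → s j = false)).image List.ofFn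

/-- `Q_r(σ,x) := Σ_{i≥1} 2^i Σ_{w ∈ W(r,i)} Par(σ, xw)` in `ℤ₂`. -/
noncomputable def Qr (r : ℕ) (σ : List Bool → List Bool) (x : List Bool) : ℤ_[2] :=
  ∑' i : ℕ, (2:ℤ_[2])^(i+1) * ∑ w ∈ Wset r (i+1), (par σ (x ++ w) : ℤ_[2])

/-- `P_r(σ,x) := (−1)^{Par(σ,x)} + Q_r(σ,xb) − Q_r(σ,xa)` in `ℤ₂`. -/
noncomputable def Pr (r : ℕ) (σ : List Bool → List Bool) (x : List Bool) : ℤ_[2] :=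
  (-1:ℤ_[2])^(par σ x) + Qr r σ (x ++ [true]) - Qr r σ (x ++ [false])

/-- `M_{r,∞}`: tree automorphisms for which `P_r(σ,·)` is constant. -/
def Mset (r : ℕ) : Set (List Bool → List Bool) :=
  {σ | IsTreeAut σ ∧ ∀ x₁ x₂ : List Bool, Pr r σ x₁ = Pr r σ x₂}

/-- `B_{r,∞}`: elements of `M_{r,∞}` with common value `P_r(σ) = 1`. -/
def Bset (r : ℕ) : Set (List Bool → List Bool) :=
  {σ | σ ∈ Mset r ∧ Pr r σ [] = 1}

/-!
Grouping the words of `W(r, i + 1)` by their first `r` letters turns the series `Q_r` into the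
recursion `Q_r(σ, x) = 2 ∑_u (Par(σ, xu) + Q_r(σ, xua))`, with `u` of length `r - 1`. The
difference of two solutions is divisible by every power of `2`, so `Q_r(σ, ·)` is the only one,
and `P_r(τσ) = P_r(τ) P_r(σ)` follows by verifying that
`x ↦ P_r(τ) Q_r(σ, x) + Q_r(τ, σ(x))` solves the recursion of `τσ`.

For surjectivity write a unit as `1 + 2c`. Along the tree one keeps track of the value that
`Par(σ, y) + Q_r(σ, ya)` should have at each node `y`: its lowest bit is taken as the parity at
`y`, the rest is `Q_r(σ, ya)`, and `Q_r(σ, yb)` is then forced by `P_r(σ, y) = 1 + 2c`.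
-/

section Recursion

lemma eq_of_forall_eq_mul_sum {R ι κ : Type*} [CommRing R] [IsDomain R] [WfDvdMonoid R] {a : R}
    (ha : ¬IsUnit a) {s : ι → Finset κ} {next : ι → κ → ι} {g : ι → κ → R} {F G : ι → R}
    (hF : ∀ x, F x = a * ∑ u ∈ s x, (g x u + F (next x u)))
    (hG : ∀ x, G x = a * ∑ u ∈ s x, (g x u + G (next x u))) : F = G := by
  have pow_dvd : ∀ n x, a ^ n ∣ F x - G x := by
    intro n
    induction n with
    | zero => simp
    | succ n ih =>
      intro x
      rw [hF, hG, ← mul_sub, ← Finset.sum_sub_distrib, pow_succ']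
      simp only [add_sub_add_left_eq_sub]
      exact mul_dvd_mul_left a (Finset.dvd_sum fun u _ => ih _)
  funext x
  by_contra hne
  obtain ⟨n, hn⟩ := FiniteMultiplicity.of_not_isUnit ha (sub_ne_zero.2 hne)
  exact hn (pow_dvd _ x)

end Recursion

section PadicIntegers

lemma summable_padicInt_pow_mul {p : ℕ} [Fact p.Prime] {a : ℤ_[p]} (ha : ‖a‖ < 1)
    (f : ℕ → ℤ_[p]) : Summable fun i => a ^ i * f i := by
  refine .of_norm_bounded (summable_geometric_of_lt_one (norm_nonneg a) ha) fun i => ?_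
  rw [norm_mul, norm_pow]
  exact mul_le_of_le_one_right (by positivity) (PadicInt.norm_le_one _)

lemma norm_two_lt_one : ‖(2 : ℤ_[2])‖ < 1 :=
  PadicInt.norm_lt_one_iff_dvd 2 |>.2 dvd_rfl

lemma not_isUnit_two : ¬IsUnit (2 : ℤ_[2]) :=
  PadicInt.not_isUnit_iff.2 norm_two_lt_one

lemma not_isUnit_iff_even {z : ℤ_[2]} : ¬IsUnit z ↔ Even z := by
  rw [PadicInt.not_isUnit_iff, PadicInt.norm_lt_one_iff_dvd, even_iff_two_dvd, Nat.cast_ofNat]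

lemma even_or_odd_padicInt (z : ℤ_[2]) : Even z ∨ Odd z := by
  have even_sub : Even (z - z.zmodRepr) := by
    rw [← not_isUnit_iff_even]
    exact z.sub_zmodRepr_mem
  have hlt := z.zmodRepr_lt_p
  interval_cases z.zmodRepr
  · left; simpa using even_sub
  · right; simpa using even_sub.add_one

lemma isUnit_iff_odd {z : ℤ_[2]} : IsUnit z ↔ Odd z := by
  refine ⟨fun hz => (even_or_odd_padicInt z).resolve_left fun h => not_isUnit_iff_even.2 h hz,
    fun hodd => by_contra fun h => not_isUnit_two ?_⟩
  have even_one : Even (1 : ℤ_[2]) := by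
    obtain ⟨m, rfl⟩ := hodd
    simpa using (not_isUnit_iff_even.1 h).sub (even_two_mul m)
  exact isUnit_of_dvd_one even_one.two_dvd

open Classical in
/-- The lowest binary digit of a 2-adic integer, as a letter: `true` (that is, `b`) for `1`. -/
noncomputable def lowBit (z : ℤ_[2]) : Bool := decide (Odd z)

lemma exists_eq_lowBit_add_two_mul (z : ℤ_[2]) : ∃ m, z = (lowBit z).toNat + 2 * m := by
  by_cases hz : Odd z
  · obtain ⟨m, rfl⟩ := id hz
    exact ⟨m, by simp [lowBit, add_comm]⟩
  · obtain ⟨m, hm⟩ := ((even_or_odd_padicInt z).resolve_right hz).two_dvd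
    exact ⟨m, by simp [lowBit, hz, ← hm]⟩

/-- The 2-adic integer obtained from `z` by deleting its lowest binary digit. -/
noncomputable def half (z : ℤ_[2]) : ℤ_[2] := (exists_eq_lowBit_add_two_mul z).choose

lemma lowBit_add_two_mul_half (z : ℤ_[2]) : (lowBit z).toNat + 2 * half z = z :=
  (exists_eq_lowBit_add_two_mul z).choose_spec.symm

end PadicIntegers

section Words

/-- The finite set of all words of length `n`, that is, the `n`-th level of the tree. -/
noncomputable def words (n : ℕ) : Finset (List Bool) := (List.finite_length_eq Bool n).toFinset

lemma mem_words {n : ℕ} {w : List Bool} : w ∈ words n ↔ w.length = n := by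
  simp [words]

lemma words_zero : words 0 = {[]} := by
  ext w
  simp [mem_words]

lemma sum_words_succ {M : Type*} [AddCommMonoid M] (n : ℕ) (f : List Bool → M) :
    ∑ w ∈ words (n + 1), f w = ∑ s : Bool, ∑ u ∈ words n, f (s :: u) := by
  have h : words (n + 1) = (Finset.univ ×ˢ words n).image fun p => p.1 :: p.2 := by
    ext w
    cases w <;> simp [mem_words]
  rw [h, Finset.sum_image (by rintro ⟨s, u⟩ - ⟨t, v⟩ - h; simpa using h), Finset.sum_product]

lemma mem_Wset {r i : ℕ} {w : List Bool} :
    w ∈ Wset r i ↔ w.length = r * i - 1 ∧ ∀ j, r ∣ j + 1 → w[j]? ≠ some true := by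
  simp only [Wset, Finset.mem_image, Finset.mem_filter, Finset.mem_univ, true_and]
  constructor
  · rintro ⟨s, hs, rfl⟩
    refine ⟨List.length_ofFn, fun j hj => ?_⟩
    rw [List.getElem?_ofFn]
    split_ifs with hlt <;> simp [hs ⟨j, _⟩ hj]
  · rintro ⟨hlen, hw⟩
    refine ⟨fun j => w[j.1], fun j hj => ?_, List.ext_getElem (by simp [hlen]) (by simp)⟩
    exact Bool.eq_false_of_not_eq_true fun h => hw j hj (by simp [← h])

lemma Wset_one (r : ℕ) : Wset r 1 = words (r - 1) := by
  ext w
  rw [mem_Wset, mem_words, mul_one, and_iff_left_iff_imp]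
  intro hlen j hj
  have hle := Nat.le_of_dvd j.succ_pos hj
  simp [show w.length ≤ j by omega]

lemma append_cons_mem_Wset_iff {r i : ℕ} {u w : List Bool} {s : Bool} (hu : u.length + 1 = r) :
    u ++ s :: w ∈ Wset r (i + 2) ↔ s = false ∧ w ∈ Wset r (i + 1) := by
  have getElem?_shift (j : ℕ) : (u ++ s :: w)[j + r]? = w[j]? := by
    rw [List.getElem?_append_right (by omega), show j + r - u.length = j + 1 by omega,
      List.getElem?_cons_succ]
  have getElem?_mid : (u ++ s :: w)[u.length]? = some s := by simp
  have hlen : (u ++ s :: w).length = r * (i + 2) - 1 ↔ w.length = r * (i + 1) - 1 := by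
    have : r ≤ r * (i + 1) := Nat.le_mul_of_pos_right r i.succ_pos
    simp only [List.length_append, List.length_cons, mul_add] at this ⊢
    omega
  rw [mem_Wset, mem_Wset, hlen]
  constructor
  · rintro ⟨hl, h⟩
    refine ⟨by simpa [getElem?_mid] using h u.length hu.symm.dvd, hl, fun j hj => ?_⟩
    rw [← getElem?_shift]
    exact h _ (by rw [add_right_comm]; exact hj.add dvd_rfl)
  · rintro ⟨rfl, hl, h⟩
    refine ⟨hl, fun j hj => ?_⟩
    obtain rfl | hlt := (Nat.le_of_dvd j.succ_pos hj).eq_or_lt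
    · simp [show j = u.length by omega]
    · obtain ⟨k, rfl⟩ := Nat.exists_eq_add_of_le' (Nat.lt_succ_iff.1 hlt)
      rw [getElem?_shift]
      exact h k ((Nat.dvd_add_left dvd_rfl).1 (by rwa [add_right_comm] at hj))

lemma Wset_add_two {r : ℕ} (hr : 1 ≤ r) (i : ℕ) :
    Wset r (i + 2) =
      (words (r - 1) ×ˢ Wset r (i + 1)).image fun p => p.1 ++ false :: p.2 := by
  ext w
  simp only [Finset.mem_image, Finset.mem_product, mem_words, Prod.exists]
  constructor
  · intro hw
    have hlen : r - 1 < w.length := by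
      rw [(mem_Wset.1 hw).1, mul_add]
      omega
    have hsplit : w.take (r - 1) ++ w[r - 1] :: w.drop (r - 1 + 1) = w := by simp
    have htake : (w.take (r - 1)).length = r - 1 := by simp [hlen.le]
    rw [← hsplit, append_cons_mem_Wset_iff (by omega)] at hw
    exact ⟨_, _, ⟨htake, hw.2⟩, hw.1 ▸ hsplit⟩
  · rintro ⟨u, w, ⟨hu, hw⟩, rfl⟩
    exact (append_cons_mem_Wset_iff (by omega)).2 ⟨rfl, hw⟩

lemma sum_Wset_add_two {M : Type*} [AddCommMonoid M] {r : ℕ} (hr : 1 ≤ r) (i : ℕ)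
    (f : List Bool → M) :
    ∑ w ∈ Wset r (i + 2), f w = ∑ u ∈ words (r - 1), ∑ w ∈ Wset r (i + 1), f (u ++ false :: w) := by
  rw [Wset_add_two hr, Finset.sum_image, Finset.sum_product]
  rintro ⟨u, w⟩ hu ⟨v, w'⟩ hv h
  simp only [Finset.coe_product, Set.mem_prod, Finset.mem_coe, mem_words] at hu hv
  simpa using List.append_inj h (hu.1.trans hv.1.symm)

end Words

section RecursionOfQr

variable {r : ℕ}

lemma summable_Qr (r : ℕ) (σ : List Bool → List Bool) (x : List Bool) :
    Summable fun i : ℕ =>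
      (2 : ℤ_[2]) ^ (i + 1) * ∑ w ∈ Wset r (i + 1), (par σ (x ++ w) : ℤ_[2]) :=
  (summable_padicInt_pow_mul norm_two_lt_one fun i =>
    ∑ w ∈ Wset r i, (par σ (x ++ w) : ℤ_[2])).comp_injective (add_left_injective 1)

lemma Qr_eq_two_mul_sum (hr : 1 ≤ r) (σ : List Bool → List Bool) (x : List Bool) :
    Qr r σ x =
      2 * ∑ u ∈ words (r - 1), (par σ (x ++ u) + Qr r σ (x ++ u ++ [false])) := by
  have htail : ∑' i : ℕ, (2 : ℤ_[2]) ^ (i + 2) *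
        ∑ w ∈ Wset r (i + 2), (par σ (x ++ w) : ℤ_[2]) =
      2 * ∑ u ∈ words (r - 1), Qr r σ (x ++ u ++ [false]) := by
    simp only [Qr]
    rw [← Summable.tsum_finsetSum fun u _ => summable_Qr r σ _, ← Summable.tsum_mul_left]
    · refine tsum_congr fun i => ?_
      rw [sum_Wset_add_two hr, ← Finset.mul_sum, pow_succ' _ (i + 1), mul_assoc]
      simp only [List.append_assoc, List.singleton_append]
    · exact summable_sum fun u _ => summable_Qr r σ _
  rw [Qr, (summable_Qr r σ x).tsum_eq_zero_add, htail, Finset.sum_add_distrib, mul_add, zero_add,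
    pow_one, Wset_one]

lemma Qr_eq_of_forall_eq_two_mul_sum (hr : 1 ≤ r) {σ : List Bool → List Bool}
    {F : List Bool → ℤ_[2]}
    (hF : ∀ x, F x = 2 * ∑ u ∈ words (r - 1), (par σ (x ++ u) + F (x ++ u ++ [false]))) :
    Qr r σ = F :=
  eq_of_forall_eq_mul_sum not_isUnit_two (Qr_eq_two_mul_sum hr σ) hF

lemma isUnit_Pr (hr : 1 ≤ r) (σ : List Bool → List Bool) (x : List Bool) : IsUnit (Pr r σ x) := by
  have even_Qr (y) : Even (Qr r σ y) := Qr_eq_two_mul_sum hr σ y ▸ even_two_mul _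
  exact isUnit_iff_odd.2 ((odd_neg_one.pow.add_even (even_Qr _)).sub_even (even_Qr _))

end RecursionOfQr

lemma neg_one_pow_par {R : Type*} [Ring R] (σ : List Bool → List Bool) (x : List Bool) :
    (-1 : R) ^ par σ x = 1 - 2 * par σ x := by
  unfold par
  split_ifs <;> norm_num

namespace IsTreeAut

variable {σ τ : List Bool → List Bool}

lemma par_cases (hσ : IsTreeAut σ) (x : List Bool) :
    (par σ x = 0 ∧ ∀ s, σ (x ++ [s]) = σ x ++ [s]) ∨
      (par σ x = 1 ∧ ∀ s, σ (x ++ [s]) = σ x ++ [!s]) := by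
  obtain ⟨s, hs⟩ := hσ.2.2 x false
  obtain ⟨t, ht⟩ := hσ.2.2 x true
  have hne : s ≠ t := by
    rintro rfl
    simpa using hσ.1.1 (hs.trans ht.symm)
  cases s <;> cases t <;> simp_all [par]

lemma comp (hτ : IsTreeAut τ) (hσ : IsTreeAut σ) : IsTreeAut (τ ∘ σ) := by
  refine ⟨hτ.1.comp hσ.1, fun w => (hτ.2.1 _).trans (hσ.2.1 w), fun w s => ?_⟩
  obtain ⟨t, ht⟩ := hσ.2.2 w s
  simpa only [Function.comp_apply, ht] using hτ.2.2 (σ w) t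

lemma symm {σ : List Bool ≃ List Bool} (hσ : IsTreeAut σ) : IsTreeAut σ.symm := by
  refine ⟨σ.symm.bijective, fun w => by rw [← hσ.2.1, σ.apply_symm_apply], fun w s => ?_⟩
  rcases hσ.par_cases (σ.symm w) with ⟨-, h⟩ | ⟨-, h⟩
  · exact ⟨s, by rw [σ.symm_apply_eq, h, σ.apply_symm_apply]⟩
  · exact ⟨!s, by rw [σ.symm_apply_eq, h, σ.apply_symm_apply, Bool.not_not]⟩

lemma exists_eq_comp (hτ : IsTreeAut τ) (hσ : IsTreeAut σ) : ∃ β, IsTreeAut β ∧ σ = τ ∘ β := by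
  obtain ⟨e, rfl⟩ : ∃ e : List Bool ≃ List Bool, ⇑e = τ := ⟨.ofBijective τ hτ.1, rfl⟩
  exact ⟨e.symm ∘ σ, hτ.symm.comp hσ, by simp [← Function.comp_assoc]⟩

lemma sum_apply_append {M : Type*} [AddCommMonoid M] (hσ : IsTreeAut σ) (n : ℕ) (x : List Bool)
    (f : List Bool → M) : ∑ u ∈ words n, f (σ (x ++ u)) = ∑ u ∈ words n, f (σ x ++ u) := by
  induction n generalizing x with
  | zero => simp [words_zero]
  | succ n ih =>
    calc ∑ u ∈ words (n + 1), f (σ (x ++ u))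
        = ∑ s : Bool, ∑ u ∈ words n, f (σ (x ++ [s] ++ u)) := by
          simp only [sum_words_succ, List.append_assoc, List.singleton_append]
      _ = ∑ s : Bool, ∑ u ∈ words n, f (σ (x ++ [s]) ++ u) := by simp only [ih]
      _ = ∑ s : Bool, ∑ u ∈ words n, f (σ x ++ [s] ++ u) := by
          rcases hσ.par_cases x with ⟨-, h⟩ | ⟨-, h⟩ <;> simp [h, add_comm]
      _ = ∑ u ∈ words (n + 1), f (σ x ++ u) := by
          simp only [sum_words_succ, List.append_assoc, List.singleton_append]

section Ring

variable {R : Type*} [Ring R]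

lemma par_comp (hτ : IsTreeAut τ) (hσ : IsTreeAut σ) (x : List Bool) :
    (par (τ ∘ σ) x : R) = par σ x + par τ (σ x) - 2 * par σ x * par τ (σ x) := by
  have h : par (τ ∘ σ) x = if τ (σ (x ++ [false])) = τ (σ x) ++ [false] then 0 else 1 := rfl
  rcases hσ.par_cases x with ⟨hx, hxs⟩ | ⟨hx, hxs⟩ <;>
    rcases hτ.par_cases (σ x) with ⟨hy, hys⟩ | ⟨hy, hys⟩ <;>
    norm_num [h, hx, hxs, hy, hys]

lemma apply_append_false (hσ : IsTreeAut σ) (x : List Bool) (f : List Bool → R) :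
    f (σ (x ++ [false])) =
      f (σ x ++ [false]) + par σ x * (f (σ x ++ [true]) - f (σ x ++ [false])) := by
  rcases hσ.par_cases x with ⟨hx, hxs⟩ | ⟨hx, hxs⟩ <;> simp [hx, hxs]

lemma apply_append_true (hσ : IsTreeAut σ) (x : List Bool) (f : List Bool → R) :
    f (σ (x ++ [true])) =
      f (σ x ++ [true]) - par σ x * (f (σ x ++ [true]) - f (σ x ++ [false])) := by
  rcases hσ.par_cases x with ⟨hx, hxs⟩ | ⟨hx, hxs⟩ <;> simp [hx, hxs]

end Ring

end IsTreeAut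

section Multiplicativity

variable {r : ℕ} {σ τ : List Bool → List Bool}

lemma Qr_append_true_sub_of_mem_Mset (hτ : τ ∈ Mset r) (y : List Bool) :
    Qr r τ (y ++ [true]) - Qr r τ (y ++ [false]) = Pr r τ [] - (1 - 2 * par τ y) := by
  rw [hτ.2 [] y, Pr, ← neg_one_pow_par]
  ring

lemma Qr_comp (hr : 1 ≤ r) (hτ : τ ∈ Mset r) (hσ : IsTreeAut σ) (x : List Bool) :
    Qr r (τ ∘ σ) x = Pr r τ [] * Qr r σ x + Qr r τ (σ x) := by
  refine congrFun (Qr_eq_of_forall_eq_two_mul_sum hr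
    (F := fun x => Pr r τ [] * Qr r σ x + Qr r τ (σ x)) fun x => ?_) x
  have hτ_sum := hσ.sum_apply_append (r - 1) x fun y => (par τ y : ℤ_[2]) + Qr r τ (y ++ [false])
  rw [Qr_eq_two_mul_sum hr σ x, Qr_eq_two_mul_sum hr τ (σ x), ← hτ_sum, mul_left_comm, ← mul_add,
    Finset.mul_sum, ← Finset.sum_add_distrib]
  congr 1
  refine Finset.sum_congr rfl fun u _ => ?_
  rw [hτ.1.par_comp hσ, hσ.apply_append_false _ (Qr r τ), Qr_append_true_sub_of_mem_Mset hτ]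
  ring

lemma Pr_comp (hr : 1 ≤ r) (hτ : τ ∈ Mset r) (hσ : IsTreeAut σ) (x : List Bool) :
    Pr r (τ ∘ σ) x = Pr r τ [] * Pr r σ x := by
  rw [Pr, Pr.eq_def r σ, neg_one_pow_par, neg_one_pow_par, hτ.1.par_comp hσ,
    Qr_comp hr hτ hσ, Qr_comp hr hτ hσ, hσ.apply_append_false _ (Qr r τ),
    hσ.apply_append_true _ (Qr r τ)]
  linear_combination (1 - 2 * (par σ x : ℤ_[2])) * Qr_append_true_sub_of_mem_Mset hτ (σ x)

lemma exists_mem_Bset_eq_comp_iff (hr : 1 ≤ r) (hσ : σ ∈ Mset r) (hτ : τ ∈ Mset r) :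
    (∃ β ∈ Bset r, σ = τ ∘ β) ↔ Pr r σ [] = Pr r τ [] := by
  constructor
  · rintro ⟨β, hβ, rfl⟩
    rw [Pr_comp hr hτ hβ.1.1, hβ.2, mul_one]
  · intro h
    obtain ⟨β, hβ, rfl⟩ := hτ.1.exists_eq_comp hσ.1
    have Pr_β (x) : Pr r β x = 1 := by
      refine (isUnit_Pr hr τ []).mul_left_cancel ?_
      rw [← Pr_comp hr hτ hβ, hσ.2 x [], h, mul_one]
    exact ⟨β, ⟨⟨hβ, fun x₁ x₂ => (Pr_β x₁).trans (Pr_β x₂).symm⟩, Pr_β []⟩, rfl⟩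

end Multiplicativity

section Portrait

/-- The tree automorphism with portrait `p`: it swaps the two subtrees below the node `x` exactly
when `p x` is `true`. -/
def ofPortrait (p : List Bool → Bool) : List Bool → List Bool
  | [] => []
  | s :: w => (s ^^ p []) :: ofPortrait (fun v => p (s :: v)) w

lemma length_ofPortrait (p : List Bool → Bool) (w : List Bool) :
    (ofPortrait p w).length = w.length := by
  induction w generalizing p with
  | nil => rfl
  | cons s w ih => simp [ofPortrait, ih]

lemma ofPortrait_append_singleton (p : List Bool → Bool) (w : List Bool) (s : Bool) :
    ofPortrait p (w ++ [s]) = ofPortrait p w ++ [s ^^ p w] := by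
  induction w generalizing p with
  | nil => rfl
  | cons t w ih => simp [ofPortrait, ih]

lemma ofPortrait_injective (p : List Bool → Bool) : Function.Injective (ofPortrait p) := by
  intro v
  induction v generalizing p with
  | nil => rintro (_ | ⟨t, w⟩) h <;> simp_all [ofPortrait]
  | cons s v ih =>
    rintro (_ | ⟨t, w⟩) h
    · simp [ofPortrait] at h
    · obtain ⟨hst, hvw⟩ := List.cons.inj h
      obtain rfl := Bool.xor_left_inj.1 hst
      rw [ih _ hvw]

lemma ofPortrait_surjective (p : List Bool → Bool) : Function.Surjective (ofPortrait p) := by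
  intro v
  induction v generalizing p with
  | nil => exact ⟨[], rfl⟩
  | cons s v ih =>
    obtain ⟨w, hw⟩ := ih fun v => p ((s ^^ p []) :: v)
    exact ⟨(s ^^ p []) :: w, by simp [ofPortrait, hw]⟩

lemma isTreeAut_ofPortrait (p : List Bool → Bool) : IsTreeAut (ofPortrait p) :=
  ⟨⟨ofPortrait_injective p, ofPortrait_surjective p⟩, length_ofPortrait p,
    fun w s => ⟨_, ofPortrait_append_singleton p w s⟩⟩

lemma par_ofPortrait (p : List Bool → Bool) (x : List Bool) :
    par (ofPortrait p) x = (p x).toNat := by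
  rw [par, ofPortrait_append_singleton]
  cases p x <;> simp

end Portrait

section Surjectivity

variable {r : ℕ}

/-- `demand r c x i` is the value that `Par(σ, y) + Q_r(σ, ya)` is to have at the node `y = x aⁱ`
so that `P_r(σ, ·) = 1 + 2c`, for `i < r`. Its entry `i = r - 1` is `Q_r(σ, x) / 2`: the whole sum
in the recursion for `Q_r(σ, x)` is demanded of the single node `x aʳ⁻¹`. -/
noncomputable def demand (r : ℕ) (c : ℤ_[2]) (x : List Bool) : ℕ → ℤ_[2] :=
  x.foldl (init := 0) fun q s i =>
    if i + 1 < r then (if s then 0 else q (i + 1))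
    else half (q 0) + if s then c + (lowBit (q 0)).toNat else 0

lemma demand_append_singleton (r : ℕ) (c : ℤ_[2]) (x : List Bool) (s : Bool) (i : ℕ) :
    demand r c (x ++ [s]) i =
      if i + 1 < r then (if s then 0 else demand r c x (i + 1))
      else half (demand r c x 0) + if s then c + (lowBit (demand r c x 0)).toNat else 0 := by
  simp only [demand, List.foldl_append, List.foldl_cons, List.foldl_nil]

lemma demand_append_false_pred (r : ℕ) (c : ℤ_[2]) (x : List Bool) :
    demand r c (x ++ [false]) (r - 1) = half (demand r c x 0) := by
  rw [demand_append_singleton, if_neg (by omega)]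
  simp

lemma demand_append_true_pred (r : ℕ) (c : ℤ_[2]) (x : List Bool) :
    demand r c (x ++ [true]) (r - 1) =
      half (demand r c x 0) + (c + (lowBit (demand r c x 0)).toNat) := by
  rw [demand_append_singleton, if_neg (by omega), if_pos rfl]

lemma sum_words_demand (c : ℤ_[2]) (x : List Bool) {i : ℕ} (hi : i < r) :
    ∑ u ∈ words i, demand r c (x ++ u) 0 = demand r c x i := by
  induction i generalizing x with
  | zero => simp [words_zero]
  | succ i ih =>
    calc ∑ u ∈ words (i + 1), demand r c (x ++ u) 0
        = ∑ s : Bool, ∑ u ∈ words i, demand r c (x ++ [s] ++ u) 0 := by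
          simp only [sum_words_succ, List.append_assoc, List.singleton_append]
      _ = ∑ s : Bool, demand r c (x ++ [s]) i := by simp only [ih _ (by omega)]
      _ = demand r c x (i + 1) := by simp [demand_append_singleton, hi]

/-- The tree automorphism whose parity at `x` is the lowest bit of the value demanded at `x`. -/
noncomputable def demandAut (r : ℕ) (c : ℤ_[2]) : List Bool → List Bool :=
  ofPortrait fun x => lowBit (demand r c x 0)

lemma Qr_demandAut (hr : 1 ≤ r) (c : ℤ_[2]) (x : List Bool) :
    Qr r (demandAut r c) x = 2 * demand r c x (r - 1) := by
  refine congrFun (Qr_eq_of_forall_eq_two_mul_sum hr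
    (F := fun x => 2 * demand r c x (r - 1)) fun x => ?_) x
  simp only [demandAut, par_ofPortrait, demand_append_false_pred, lowBit_add_two_mul_half]
  rw [sum_words_demand c x (by omega)]

lemma Pr_demandAut (hr : 1 ≤ r) (c : ℤ_[2]) (x : List Bool) :
    Pr r (demandAut r c) x = 1 + 2 * c := by
  rw [Pr, Qr_demandAut hr, Qr_demandAut hr, demand_append_true_pred, demand_append_false_pred,
    neg_one_pow_par, demandAut, par_ofPortrait]
  ring

lemma exists_mem_Mset_Pr_eq (hr : 1 ≤ r) (u : ℤ_[2]ˣ) : ∃ σ ∈ Mset r, Pr r σ [] = u := by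
  obtain ⟨c, hc⟩ := isUnit_iff_odd.1 u.isUnit
  refine ⟨demandAut r c, ⟨isTreeAut_ofPortrait _, fun x₁ x₂ => ?_⟩, ?_⟩
  · rw [Pr_demandAut hr, Pr_demandAut hr]
  · rw [Pr_demandAut hr, hc, add_comm]

end Surjectivity

/-- For every `r ≥ 1`, the group homomorphism `P_r : M_{r,∞} → ℤ₂^×`
is surjective; consequently the quotient `M_{r,∞}/B_{r,∞}` (realized as the quotient of
`M_{r,∞}` by the coset relation `σ ~ τ ↔ ∃ β ∈ B_{r,∞}, σ = τ ∘ β`) is isomorphic to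
`ℤ₂^×` via the map induced by `P_r`. -/
theorem Pr_surjective_and_quotient_iso (r : ℕ) (hr : 1 ≤ r) :
    (∀ u : ℤ_[2]ˣ, ∃ σ ∈ Mset r, Pr r σ [] = (u : ℤ_[2])) ∧
    ∃ e : Quot (fun σ τ : {σ : List Bool → List Bool // σ ∈ Mset r} =>
        ∃ β ∈ Bset r, σ.1 = τ.1 ∘ β) ≃ ℤ_[2]ˣ,
      ∀ σ : {σ : List Bool → List Bool // σ ∈ Mset r},
        ((e (Quot.mk _ σ) : ℤ_[2]ˣ) : ℤ_[2]) = Pr r σ.1 [] := by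
  refine ⟨exists_mem_Mset_Pr_eq hr, ?_⟩
  let P : {σ : List Bool → List Bool // σ ∈ Mset r} → ℤ_[2]ˣ :=
    fun σ => (isUnit_Pr hr σ.1 []).unit
  have P_surjective : Function.Surjective P := fun u => by
    obtain ⟨σ, hσ, hu⟩ := exists_mem_Mset_Pr_eq hr u
    exact ⟨⟨σ, hσ⟩, Units.ext hu⟩
  have coset_iff (σ τ : {σ : List Bool → List Bool // σ ∈ Mset r}) :
      (∃ β ∈ Bset r, σ.1 = τ.1 ∘ β) ↔ Setoid.ker P σ τ :=
    (exists_mem_Bset_eq_comp_iff hr σ.2 τ.2).trans (Units.val_inj (a := P σ) (b := P τ))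
  exact ⟨(Quot.congrRight coset_iff).trans (Setoid.quotientKerEquivOfSurjective P P_surjective),
    fun _ => rfl⟩
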